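/- arXiv:2405.20129 — 4 statements merged into one kernel-verified Lean document; each statement's English description precedes it below -/
import Mathlib

section
/- Let n ≥ 4 be an even integer and let σ ≥ 0. Let R be an algebraic curvature tensor on ℝ^n whose isotropic curvature is uniformly bounded below by σ, i.e. for every orthonormal 4-tuple of vectors v₁, v₂, v₃, v₄ in EuclideanSpace ℝ (Fin n) one has R(v₁,v₃,v₁,v₃) + R(v₁,v₄,v₁,v₄) + R(v₂,v₃,v₂,v₃) + R(v₂,v₄,v₂,v₄) − 2·R(v₁,v₂,v₃,v₄) ≥ σ (where R(x,y,z,w) denotes the multilinear extension of R). Then for every complex two-form ω on ℝ^n, the Weitzenböck curvature term satisfies Re ⟨ℛω, ω⟩ ≥ ((n−2)/2) · σ · |ω|². -/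
/-!
Since `R` is real, `Re ⟨ℛω, ω⟩` is the sum of the values of the real quadratic form `⟨ℛa, a⟩` at
the real and imaginary parts of `ω` (`re_weitzenbock`), so real two-forms `a` suffice. By the
Bianchi identity, `⟨ℛa, a⟩ = 2 Σ Ric i k (a aᵀ) i k - Σ R i j k l a i j a k l`
(`quadForm_eq_contr`).

With `n = 2m`, there is an orthonormal basis `e₁, …, eₘ, f₁, …, fₘ` with `a eₚ = μₚ fₚ` and
`a fₚ = -μₚ eₚ` (`exists_skew_normal_form`). In it, `⟨ℛa, a⟩` is the sum over all pairs `p, q` of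
`(μₚ² + μ_q²) K p q - 4 μₚ μ_q R(eₚ, fₚ, e_q, f_q)`, where `K p q` is the sum of the four sectional
curvatures between the planes `p` and `q`. The diagonal terms vanish; for `p ≠ q`, the isotropic
curvature bound applied to `(eₚ, fₚ, e_q, f_q)` and `(eₚ, fₚ, f_q, e_q)` bounds the term below by
`σ (μₚ² + μ_q²)`. Summation gives `2 (m - 1) σ Σ μₚ² = (m - 1) σ |a|²` (`quadForm_lower_bound`).
-/

open Finset

/-- The multilinear extension of an algebraic curvature tensor to `EuclideanSpace ℝ (Fin n)`. -/
noncomputable def curvExt {n : ℕ} (R : Fin n → Fin n → Fin n → Fin n → ℝ)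
    (x y z w : EuclideanSpace ℝ (Fin n)) : ℝ :=
  ∑ i, ∑ j, ∑ k, ∑ l, R i j k l * x i * y j * z k * w l

/-- The Ricci contraction of an algebraic curvature tensor. -/
noncomputable def ricci {n : ℕ} (R : Fin n → Fin n → Fin n → Fin n → ℝ) (i k : Fin n) : ℝ :=
  ∑ j, R i j k j

/-- The Weitzenböck curvature operator `ℛ` on complex two-forms, in an orthonormal frame:
`(ℛω) i j = Σ_k Ric i k · ω k j + Σ_k ω i k · Ric k j − 2 Σ_{k,l} R i k j l · ω k l`. -/
noncomputable def weitzenbockOp {n : ℕ} (R : Fin n → Fin n → Fin n → Fin n → ℝ)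
    (ω : Fin n → Fin n → ℂ) (i j : Fin n) : ℂ :=
  (∑ k, (ricci R i k : ℂ) * ω k j) + (∑ k, ω i k * (ricci R k j : ℂ)) -
    2 * ∑ k, ∑ l, (R i k j l : ℂ) * ω k l

/-! ### Normal form of skew-adjoint operators -/

/-- Normal form of a skew-adjoint operator on an even-dimensional Euclidean space: an orthonormal
basis `e₁, …, eₘ, f₁, …, fₘ` in which the operator is a sum of planar rotations by a right angle,
scaled by `μ₁, …, μₘ`. Induction on `m`: either the operator vanishes, or its square, which is
symmetric, has a unit eigenvector `u` with nonzero eigenvalue; then `u` and `A u` span an invariant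
plane, whose orthogonal complement is invariant too. -/
theorem exists_skew_normal_form (m : ℕ) : ∀ (E : Type) [NormedAddCommGroup E]
    [InnerProductSpace ℝ E] [FiniteDimensional ℝ E] (A : E →ₗ[ℝ] E),
    (∀ x y, inner ℝ (A x) y = -inner ℝ x (A y)) → Module.finrank ℝ E = m + m →
    ∃ (e f : Fin m → E) (μ : Fin m → ℝ),
      Orthonormal ℝ (Sum.elim e f) ∧ ∀ p, A (e p) = μ p • f p ∧ A (f p) = -(μ p • e p) := by
  induction m with
  | zero =>
    intro E _ _ _ A hA hd
    refine ⟨Fin.elim0, Fin.elim0, Fin.elim0, ⟨?_, ?_⟩, fun p => p.elim0⟩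
    · rintro (p | p) <;> exact p.elim0
    · rintro (p | p) <;> exact p.elim0
  | succ m ih =>
    intro E _ _ _ A hA hd
    have hT : (A ∘ₗ A).IsSymmetric := by
      intro x y
      simp [hA]
    by_cases h0 : ∃ i, hT.eigenvalues hd i ≠ 0
    · obtain ⟨i, hi⟩ := h0
      set c := hT.eigenvalues hd i with hc
      set u := hT.eigenvectorBasis hd i with hu
      have hAu : A (A u) = c • u := by
        exact hT.apply_eigenvectorBasis hd i
      have hu1 : ‖u‖ = 1 := (hT.eigenvectorBasis hd).orthonormal.1 i
      have huu : inner ℝ u u = 1 := by rw [real_inner_self_eq_norm_sq, hu1]; norm_num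
      have hnn : ‖A u‖ ^ 2 = -c := by
        rw [← real_inner_self_eq_norm_sq, hA, hAu, inner_smul_right, huu]; ring
      set l := ‖A u‖ with hl
      have hl0 : l ≠ 0 := by
        intro h
        rw [h] at hnn
        apply hi
        linarith
      set v := l⁻¹ • A u with hv
      have hAu' : A u = l • v := by rw [hv, smul_smul, mul_inv_cancel₀ hl0, one_smul]
      have hAv : A v = -(l • u) := by
        rw [hv, map_smul, hAu, smul_smul, ← neg_smul]
        congr 1
        have : c = -l ^ 2 := by linarith
        rw [this]
        field_simp
      have huv : inner ℝ u v = 0 := by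
        have h1 : inner ℝ (A u) u = 0 := by
          have := hA u u
          rw [real_inner_comm (A u) u] at this
          have h2 := real_inner_comm (A u) u
          linarith
        rw [hv, inner_smul_right, real_inner_comm, h1, mul_zero]
      have hvv : inner ℝ v v = 1 := by
        rw [hv, inner_smul_left, inner_smul_right, real_inner_self_eq_norm_sq, ← hl]
        simp
        field_simp
      have hv1 : ‖v‖ = 1 := by
        rw [real_inner_self_eq_norm_sq] at hvv
        exact (pow_eq_one_iff_of_nonneg (norm_nonneg v) two_ne_zero).1 hvv
      have hvu : inner ℝ v u = 0 := by rw [real_inner_comm]; exact huv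
      have hon : Orthonormal ℝ ![u, v] := by
        rw [orthonormal_iff_ite]
        intro a b
        fin_cases a <;> fin_cases b <;> simp [huv, hvu, hu1, hv1]
      set P := Submodule.span ℝ (Set.range ![u, v]) with hP
      have hPd : Module.finrank ℝ P = 2 := by
        rw [hP, finrank_span_eq_card hon.linearIndependent]; simp
      have hWd : Module.finrank ℝ Pᗮ = m + m := by
        have := P.finrank_add_finrank_orthogonal
        omega
      have hmem : ∀ x, x ∈ Pᗮ ↔ inner ℝ u x = 0 ∧ inner ℝ v x = 0 := by
        intro x
        constructor
        · intro hx
          rw [Submodule.mem_orthogonal] at hx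
          exact ⟨hx u (Submodule.subset_span ⟨0, rfl⟩), hx v (Submodule.subset_span ⟨1, rfl⟩)⟩
        · rintro ⟨h1, h2⟩
          rw [Submodule.mem_orthogonal]
          intro y hy
          induction hy using Submodule.span_induction with
          | mem y hy =>
            obtain ⟨i, rfl⟩ := hy
            fin_cases i
            · exact h1
            · exact h2
          | zero => exact inner_zero_left _
          | add y z _ _ hy hz => rw [inner_add_left, hy, hz, add_zero]
          | smul c y _ hy => rw [inner_smul_left, hy, mul_zero]
      have hinv : ∀ x ∈ Pᗮ, A x ∈ Pᗮ := by
        intro x hx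
        rw [hmem] at hx ⊢
        have h1 := hA u x
        have h2 := hA v x
        rw [hAu', inner_smul_left, hx.2] at h1
        rw [hAv, inner_neg_left, inner_smul_left, hx.1] at h2
        simp at h1 h2
        exact ⟨h1, h2⟩
      obtain ⟨e, f, μ, ho, hef⟩ := ih Pᗮ (A.restrict hinv)
        (fun x y => by simpa using hA x y) hWd
      rw [orthonormal_iff_ite] at ho
      have hue : ∀ p, inner ℝ u (e p : E) = 0 := fun p => ((hmem _).1 (e p).2).1
      have hve : ∀ p, inner ℝ v (e p : E) = 0 := fun p => ((hmem _).1 (e p).2).2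
      have huf : ∀ p, inner ℝ u (f p : E) = 0 := fun p => ((hmem _).1 (f p).2).1
      have hvf : ∀ p, inner ℝ v (f p : E) = 0 := fun p => ((hmem _).1 (f p).2).2
      have hee : ∀ p q, inner ℝ (e p : E) (e q : E) = if p = q then (1:ℝ) else 0 := fun p q => by
        simpa using ho (Sum.inl p) (Sum.inl q)
      have hff : ∀ p q, inner ℝ (f p : E) (f q : E) = if p = q then (1:ℝ) else 0 := fun p q => by
        simpa using ho (Sum.inr p) (Sum.inr q)
      have hef' : ∀ p q, inner ℝ (e p : E) (f q : E) = (0:ℝ) := fun p q => by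
        simpa using ho (Sum.inl p) (Sum.inr q)
      have hfe' : ∀ p q, inner ℝ (f p : E) (e q : E) = (0:ℝ) := fun p q => by
        rw [real_inner_comm]; exact hef' q p
      refine ⟨Fin.cons u (fun p => (e p : E)), Fin.cons v (fun p => (f p : E)),
        Fin.cons l μ, ?_, ?_⟩
      · rw [orthonormal_iff_ite]
        rintro (p | p) (q | q) <;> refine Fin.cases ?_ (fun p => ?_) p <;>
          refine Fin.cases ?_ (fun q => ?_) q <;>
          simp [hu1, hv1, huv, hvu, hue, hve, huf, hvf, hee, hff, hef', hfe',
            real_inner_comm u, real_inner_comm v, (Fin.succ_ne_zero _).symm]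
      · intro p
        refine Fin.cases ?_ (fun p => ?_) p
        · exact ⟨hAu', hAv⟩
        · have h1 := congrArg Subtype.val (hef p).1
          have h2 := congrArg Subtype.val (hef p).2
          simpa using ⟨h1, h2⟩
    · push Not at h0
      have hAA : A ∘ₗ A = 0 := by
        apply (hT.eigenvectorBasis hd).toBasis.ext
        intro i
        have := hT.apply_eigenvectorBasis hd i
        rw [h0 i] at this
        simpa using this
      have hA0 : ∀ x, A x = 0 := by
        intro x
        have h1 : inner ℝ (A x) (A x) = (0:ℝ) := by
          rw [hA]
          have : A (A x) = 0 := LinearMap.congr_fun hAA x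
          rw [this]; simp
        exact inner_self_eq_zero.1 h1
      let b := (stdOrthonormalBasis ℝ E).reindex
        ((finCongr hd).trans finSumFinEquiv.symm)
      refine ⟨fun p => b (Sum.inl p), fun p => b (Sum.inr p), 0, ?_, fun p => by simp [hA0]⟩
      convert b.orthonormal using 1
      ext (p | p) <;> rfl

/-! ### The Weitzenböck quadratic form as a contraction -/

/-- Contraction of a four-index array against `R`, as a linear functional. -/
noncomputable def contr {n : ℕ} (R : Fin n → Fin n → Fin n → Fin n → ℝ) :
    (Fin n → Fin n → Fin n → Fin n → ℝ) →ₗ[ℝ] ℝ where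
  toFun T := ∑ i, ∑ j, ∑ k, ∑ l, R i j k l * T i j k l
  map_add' S T := by simp [mul_add, Finset.sum_add_distrib]
  map_smul' c T := by simp [Finset.mul_sum, mul_left_comm]

theorem curvExt_eq_contr {n : ℕ} (R : Fin n → Fin n → Fin n → Fin n → ℝ)
    (x y z w : EuclideanSpace ℝ (Fin n)) :
    curvExt R x y z w = contr R (fun i j k l => x i * y j * z k * w l) := by
  simp [curvExt, contr, mul_assoc]

/-- The real quadratic form `⟨ℛa, a⟩` on matrices. -/
noncomputable def quadForm {n : ℕ} (R : Fin n → Fin n → Fin n → Fin n → ℝ)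
    (a : Fin n → Fin n → ℝ) : ℝ :=
  ∑ i, ∑ j, ((∑ k, ricci R i k * a k j) + (∑ k, a i k * ricci R k j) -
    2 * ∑ k, ∑ l, R i k j l * a k l) * a i j

/-- As `R` is real, the Hermitian form splits over the real and imaginary parts of `ω`. -/
theorem re_weitzenbock {n : ℕ} (R : Fin n → Fin n → Fin n → Fin n → ℝ) (ω : Fin n → Fin n → ℂ) :
    (∑ i, ∑ j, weitzenbockOp R ω i j * (starRingEnd ℂ) (ω i j)).re =
      quadForm R (fun i j => (ω i j).re) + quadForm R (fun i j => (ω i j).im) := by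
  simp only [quadForm, Complex.re_sum, ← Finset.sum_add_distrib]
  refine Finset.sum_congr rfl fun i _ => Finset.sum_congr rfl fun j _ => ?_
  simp [weitzenbockOp, Complex.mul_re, Complex.re_sum, Complex.im_sum, Finset.sum_add_distrib]

/-- The Ricci terms of `⟨ℛa, a⟩` both equal `Σ Ric i k (a aᵀ) i k`, and the Bianchi identity turns
`2 Σ R i k j l a i j a k l` into `Σ R i j k l a i j a k l`. -/
theorem quadForm_eq_contr {n : ℕ} (R : Fin n → Fin n → Fin n → Fin n → ℝ)
    (hR1 : ∀ i j k l, R i j k l = -R j i k l)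
    (hR3 : ∀ i j k l, R i j k l = R k l i j)
    (hBianchi : ∀ i j k l, R i j k l + R j k i l + R k i j l = 0)
    (a : Fin n → Fin n → ℝ) (ha : ∀ i j, a j i = -a i j) :
    quadForm R a =
      2 * contr R (fun i j k l => (∑ s, a i s * a k s) * (if j = l then 1 else 0)) -
        contr R (fun i j k l => a i j * a k l) := by
  have hric : ∀ i k, ricci R i k = ricci R k i := fun i k =>
    Finset.sum_congr rfl fun j _ => hR3 i j k j
  have hC : contr R (fun i j k l => (∑ s, a i s * a k s) * (if j = l then 1 else 0)) =
      ∑ i, ∑ k, ricci R i k * ∑ s, a i s * a k s := by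
    simp only [contr, LinearMap.coe_mk, AddHom.coe_mk, ricci]
    refine Finset.sum_congr rfl fun i _ => ?_
    rw [Finset.sum_comm]
    refine Finset.sum_congr rfl fun k _ => ?_
    rw [Finset.sum_mul]
    refine Finset.sum_congr rfl fun j _ => ?_
    simp
  have h1 : ∑ i, ∑ j, (∑ k, ricci R i k * a k j) * a i j =
      ∑ i, ∑ k, ricci R i k * ∑ s, a i s * a k s := by
    refine Finset.sum_congr rfl fun i _ => ?_
    simp only [Finset.sum_mul, Finset.mul_sum]
    rw [Finset.sum_comm]
    refine Finset.sum_congr rfl fun k _ => Finset.sum_congr rfl fun j _ => ?_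
    ring
  have h2 : ∑ i, ∑ j, (∑ k, a i k * ricci R k j) * a i j =
      ∑ i, ∑ k, ricci R i k * ∑ s, a i s * a k s := by
    rw [Finset.sum_comm, ← h1]
    refine Finset.sum_congr rfl fun i _ => Finset.sum_congr rfl fun j _ => ?_
    rw [ha i j, mul_neg, ← neg_mul, ← Finset.sum_neg_distrib]
    congr 1
    refine Finset.sum_congr rfl fun k _ => ?_
    rw [ha k j, hric k i]
    ring
  have h3 : 2 * ∑ i, ∑ j, (∑ k, ∑ l, R i k j l * a k l) * a i j =
      contr R (fun i j k l => a i j * a k l) := by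
    -- antisymmetrising in `i, j`, the Bianchi identity gives `R i k j l - R j k i l = R i j k l`
    have h4 : ∑ i, ∑ j, (∑ k, ∑ l, R i k j l * a k l) * a i j =
        -∑ i, ∑ j, (∑ k, ∑ l, R j k i l * a k l) * a i j := by
      conv_lhs => rw [Finset.sum_comm]
      simp only [← Finset.sum_neg_distrib]
      refine Finset.sum_congr rfl fun i _ => Finset.sum_congr rfl fun j _ => ?_
      rw [ha i j]; ring
    rw [two_mul]
    nth_rewrite 2 [h4]
    rw [← sub_eq_add_neg]
    simp only [contr, LinearMap.coe_mk, AddHom.coe_mk, ← Finset.sum_sub_distrib, Finset.sum_mul]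
    refine Finset.sum_congr rfl fun i _ => Finset.sum_congr rfl fun j _ =>
      Finset.sum_congr rfl fun k _ => Finset.sum_congr rfl fun l _ => ?_
    have hb := hBianchi i k j l
    have := hR1 k j i l
    have := hR1 j i k l
    have h5 : R i j k l = R i k j l - R j k i l := by linarith
    rw [h5]; ring
  rw [hC, ← h3]
  simp only [quadForm, sub_mul, add_mul, Finset.sum_sub_distrib, Finset.sum_add_distrib]
  rw [h1, h2]
  simp only [mul_assoc, ← Finset.mul_sum]
  ring

theorem curvExt_swap_left {n : ℕ} (R : Fin n → Fin n → Fin n → Fin n → ℝ)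
    (hR1 : ∀ i j k l, R i j k l = -R j i k l) (x y z w : EuclideanSpace ℝ (Fin n)) :
    curvExt R y x z w = -curvExt R x y z w := by
  unfold curvExt
  rw [Finset.sum_comm]
  simp only [← Finset.sum_neg_distrib]
  refine Finset.sum_congr rfl fun i _ => Finset.sum_congr rfl fun j _ =>
    Finset.sum_congr rfl fun k _ => Finset.sum_congr rfl fun l _ => ?_
  rw [hR1 j i]; ring

theorem curvExt_swap_right {n : ℕ} (R : Fin n → Fin n → Fin n → Fin n → ℝ)
    (hR2 : ∀ i j k l, R i j k l = -R i j l k) (x y z w : EuclideanSpace ℝ (Fin n)) :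
    curvExt R x y w z = -curvExt R x y z w := by
  unfold curvExt
  simp only [← Finset.sum_neg_distrib]
  refine Finset.sum_congr rfl fun i _ => Finset.sum_congr rfl fun j _ => ?_
  rw [Finset.sum_comm]
  refine Finset.sum_congr rfl fun k _ => Finset.sum_congr rfl fun l _ => ?_
  rw [hR2 i j l k]; ring

/-! ### The lower bound -/

/-- The lower bound for real two-forms, read off in the normal form of `a`. -/
theorem quadForm_lower_bound {m : ℕ} (σ : ℝ)
    (R : Fin (m + m) → Fin (m + m) → Fin (m + m) → Fin (m + m) → ℝ)
    (hR1 : ∀ i j k l, R i j k l = -R j i k l)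
    (hR2 : ∀ i j k l, R i j k l = -R i j l k)
    (hR3 : ∀ i j k l, R i j k l = R k l i j)
    (hBianchi : ∀ i j k l, R i j k l + R j k i l + R k i j l = 0)
    (hIso : ∀ v₁ v₂ v₃ v₄ : EuclideanSpace ℝ (Fin (m + m)), Orthonormal ℝ ![v₁, v₂, v₃, v₄] →
      curvExt R v₁ v₃ v₁ v₃ + curvExt R v₁ v₄ v₁ v₄ + curvExt R v₂ v₃ v₂ v₃ +
        curvExt R v₂ v₄ v₂ v₄ - 2 * curvExt R v₁ v₂ v₃ v₄ ≥ σ)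
    (a : Fin (m + m) → Fin (m + m) → ℝ) (ha : ∀ i j, a j i = -a i j) :
    ((m : ℝ) - 1) * σ * ∑ i, ∑ j, a i j ^ 2 ≤ quadForm R a := by
  obtain ⟨e, f, μ, ho, hA⟩ := exists_skew_normal_form m (EuclideanSpace ℝ (Fin (m + m)))
    (Matrix.toEuclideanLin (Matrix.of a)) (by
      intro x y
      simp only [PiLp.inner_apply, Matrix.toLpLin_apply, Matrix.mulVec, dotProduct, Matrix.of_apply,
        RCLike.inner_apply, conj_trivial, Finset.sum_mul, Finset.mul_sum]
      rw [Finset.sum_comm, ← Finset.sum_neg_distrib]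
      refine Finset.sum_congr rfl fun i _ => ?_
      rw [← Finset.sum_neg_distrib]
      refine Finset.sum_congr rfl fun j _ => ?_
      rw [ha i j]; ring) (by simp)
  have hAe : ∀ p i, ∑ j, a i j * e p j = μ p * f p i := fun p i => by
    have := congrArg (fun x : EuclideanSpace ℝ (Fin (m + m)) => x i) (hA p).1
    simpa [Matrix.toLpLin_apply, Matrix.mulVec, dotProduct] using this
  have hAf : ∀ p i, ∑ j, a i j * f p j = -(μ p * e p i) := fun p i => by
    have := congrArg (fun x : EuclideanSpace ℝ (Fin (m + m)) => x i) (hA p).2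
    simpa [Matrix.toLpLin_apply, Matrix.mulVec, dotProduct] using this
  -- completeness of the orthonormal basis
  have hδ : ∀ j l, ∑ p, (e p j * e p l + f p j * f p l) = if j = l then (1:ℝ) else 0 := by
    intro j l
    let b : OrthonormalBasis (Fin m ⊕ Fin m) ℝ (EuclideanSpace ℝ (Fin (m + m))) :=
      OrthonormalBasis.mk ho (by
        rw [ho.linearIndependent.span_eq_top_of_card_eq_finrank' (by simp)])
    have h := b.sum_inner_mul_inner (EuclideanSpace.single j (1:ℝ)) (EuclideanSpace.single l (1:ℝ))
    simp [b, Fintype.sum_sum_type, EuclideanSpace.inner_single_left,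
      EuclideanSpace.inner_single_right] at h
    rw [Finset.sum_add_distrib, h]
    simp [eq_comm]
  have haij : ∀ i j, a i j = ∑ p, μ p * (f p i * e p j - e p i * f p j) := by
    intro i j
    have : a i j = ∑ l, a i l * ∑ p, (e p l * e p j + f p l * f p j) := by simp [hδ]
    rw [this]
    simp only [Finset.mul_sum]
    rw [Finset.sum_comm]
    refine Finset.sum_congr rfl fun p _ => ?_
    have h1 := hAe p i
    have h2 := hAf p i
    calc _ = (∑ l, a i l * e p l) * e p j + (∑ l, a i l * f p l) * f p j := by
          rw [Finset.sum_mul, Finset.sum_mul, ← Finset.sum_add_distrib]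
          exact Finset.sum_congr rfl fun l _ => by ring
      _ = _ := by rw [h1, h2]; ring
  have haa : ∀ i k, ∑ s, a i s * a k s = ∑ p, μ p ^ 2 * (e p i * e p k + f p i * f p k) := by
    intro i k
    calc _ = ∑ s, a i s * ∑ p, μ p * (f p k * e p s - e p k * f p s) :=
          Finset.sum_congr rfl fun s _ => by rw [← haij]
      _ = ∑ p, μ p * (f p k * (∑ s, a i s * e p s) - e p k * (∑ s, a i s * f p s)) := by
          simp only [Finset.mul_sum, ← Finset.sum_sub_distrib]
          rw [Finset.sum_comm]
          exact Finset.sum_congr rfl fun p _ => Finset.sum_congr rfl fun s _ => by ring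
      _ = _ := Finset.sum_congr rfl fun p _ => by rw [hAe, hAf]; ring
  rw [orthonormal_iff_ite] at ho
  have hee : ∀ p q, inner ℝ (e p) (e q) = if p = q then (1:ℝ) else 0 := fun p q => by
    simpa using ho (Sum.inl p) (Sum.inl q)
  have hff : ∀ p q, inner ℝ (f p) (f q) = if p = q then (1:ℝ) else 0 := fun p q => by
    simpa using ho (Sum.inr p) (Sum.inr q)
  have hef : ∀ p q, inner ℝ (e p) (f q) = (0:ℝ) := fun p q => by
    simpa using ho (Sum.inl p) (Sum.inr q)
  have hfe : ∀ p q, inner ℝ (f p) (e q) = (0:ℝ) := fun p q => by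
    rw [real_inner_comm]; exact hef q p
  have hnorm : ∑ i, ∑ j, a i j ^ 2 = 2 * ∑ p, μ p ^ 2 := by
    have h1 : ∀ i, ∑ j, a i j ^ 2 = ∑ p, μ p ^ 2 * (e p i * e p i + f p i * f p i) := fun i => by
      rw [← haa]; exact Finset.sum_congr rfl fun j _ => by ring
    simp only [h1]
    rw [Finset.sum_comm, Finset.mul_sum]
    refine Finset.sum_congr rfl fun p _ => ?_
    rw [← Finset.mul_sum, Finset.sum_add_distrib]
    have h2 := hee p p
    have h3 := hff p p
    simp only [PiLp.inner_apply, RCLike.inner_apply, conj_trivial, if_true] at h2 h3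
    rw [h2, h3]; ring
  set K : Fin m → Fin m → ℝ := fun p q =>
    curvExt R (e p) (e q) (e p) (e q) + curvExt R (e p) (f q) (e p) (f q) +
      curvExt R (f p) (e q) (f p) (e q) + curvExt R (f p) (f q) (f p) (f q) with hK
  set X : Fin m → Fin m → ℝ := fun p q => curvExt R (e p) (f p) (e q) (f q) with hX
  have hsw : ∀ x y, curvExt R x y x y = curvExt R y x y x := fun x y => by
    rw [curvExt_swap_left R hR1, curvExt_swap_right R hR2, neg_neg]
  have hself : ∀ x, curvExt R x x x x = 0 := fun x => by
    have := curvExt_swap_left R hR1 x x x x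
    linarith
  have hKsymm : ∀ p q, K p q = K q p := fun p q => by
    simp only [hK]
    rw [hsw (e p) (e q), hsw (e p) (f q), hsw (f p) (e q), hsw (f p) (f q)]; ring
  have hT1 : contr R (fun i j k l => (∑ s, a i s * a k s) * (if j = l then 1 else 0)) =
      ∑ p, ∑ q, μ p ^ 2 * K p q := by
    have : (fun i j k l => (∑ s, a i s * a k s) * (if j = l then (1:ℝ) else 0)) =
        ∑ p, ∑ q, μ p ^ 2 • ((fun i j k l => e p i * e q j * e p k * e q l) +
          (fun i j k l => e p i * f q j * e p k * f q l) +
          (fun i j k l => f p i * e q j * f p k * e q l) +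
          (fun i j k l => f p i * f q j * f p k * f q l)) := by
      funext i j k l
      rw [haa, ← hδ, Finset.sum_mul_sum]
      simp only [Finset.sum_apply, Pi.smul_apply, Pi.add_apply, smul_eq_mul]
      exact Finset.sum_congr rfl fun p _ => Finset.sum_congr rfl fun q _ => by ring
    rw [this]
    simp only [map_sum, map_smul, map_add, ← curvExt_eq_contr, smul_eq_mul, hK]
  have hT2 : contr R (fun i j k l => a i j * a k l) = ∑ p, ∑ q, 4 * (μ p * μ q * X p q) := by
    have : (fun i j k l => a i j * a k l) =
        ∑ p, ∑ q, (μ p * μ q) • ((fun i j k l => f p i * e p j * f q k * e q l) -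
          (fun i j k l => f p i * e p j * e q k * f q l) -
          (fun i j k l => e p i * f p j * f q k * e q l) +
          (fun i j k l => e p i * f p j * e q k * f q l)) := by
      funext i j k l
      rw [haij i j, haij k l, Finset.sum_mul_sum]
      simp only [Finset.sum_apply, Pi.smul_apply, Pi.add_apply, Pi.sub_apply, smul_eq_mul]
      exact Finset.sum_congr rfl fun p _ => Finset.sum_congr rfl fun q _ => by ring
    rw [this]
    simp only [map_sum, map_smul, map_add, map_sub, ← curvExt_eq_contr, smul_eq_mul, hX]
    refine Finset.sum_congr rfl fun p _ => Finset.sum_congr rfl fun q _ => ?_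
    rw [curvExt_swap_left R hR1 (e p) (f p) (f q) (e q),
      curvExt_swap_left R hR1 (e p) (f p) (e q) (f q),
      curvExt_swap_right R hR2 (e p) (f p) (e q) (f q)]
    ring
  have hQ : quadForm R a =
      ∑ p, ∑ q, ((μ p ^ 2 + μ q ^ 2) * K p q - 4 * (μ p * μ q * X p q)) := by
    rw [quadForm_eq_contr R hR1 hR3 hBianchi a ha, hT1, hT2, two_mul]
    nth_rewrite 2 [Finset.sum_comm]
    simp only [← Finset.sum_add_distrib, ← Finset.sum_sub_distrib]
    refine Finset.sum_congr rfl fun p _ => Finset.sum_congr rfl fun q _ => ?_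
    rw [hKsymm q p]; ring
  have hpq : ∀ p q, (if p = q then 0 else σ * (μ p ^ 2 + μ q ^ 2)) ≤
      (μ p ^ 2 + μ q ^ 2) * K p q - 4 * (μ p * μ q * X p q) := by
    intro p q
    split_ifs with h
    · subst h
      simp only [hK, hX, hself, hsw (f p) (e p)]
      apply le_of_eq; ring
    · have hqp : q ≠ p := Ne.symm h
      have hne1 : ∀ p, ‖e p‖ = 1 := fun p => by
        have := hee p p
        rw [real_inner_self_eq_norm_sq, if_pos rfl] at this
        exact (pow_eq_one_iff_of_nonneg (norm_nonneg (e p)) two_ne_zero).1 this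
      have hnf1 : ∀ p, ‖f p‖ = 1 := fun p => by
        have := hff p p
        rw [real_inner_self_eq_norm_sq, if_pos rfl] at this
        exact (pow_eq_one_iff_of_nonneg (norm_nonneg (f p)) two_ne_zero).1 this
      have i1 := hIso (e p) (f p) (e q) (f q) (by
        rw [orthonormal_iff_ite]
        intro a b
        fin_cases a <;> fin_cases b <;> simp [hee, hff, hef, hfe, h, hqp, hne1, hnf1])
      -- exchanging the last two vectors reverses the sign of the mixed term
      have i2 := hIso (e p) (f p) (f q) (e q) (by
        rw [orthonormal_iff_ite]
        intro a b
        fin_cases a <;> fin_cases b <;> simp [hee, hff, hef, hfe, h, hqp, hne1, hnf1])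
      rw [curvExt_swap_right R hR2 (e p) (f p) (e q) (f q)] at i2
      have j1 : σ ≤ K p q - 2 * X p q := by simp only [hK, hX]; linarith
      have j2 : σ ≤ K p q + 2 * X p q := by simp only [hK, hX]; linarith
      -- `(μₚ² + μ_q²) K - 4 μₚ μ_q X` is a combination of `K ∓ 2 X` with weights `(μₚ ± μ_q)² / 2`
      nlinarith [mul_le_mul_of_nonneg_left j1 (sq_nonneg (μ p + μ q)),
        mul_le_mul_of_nonneg_left j2 (sq_nonneg (μ p - μ q))]
  have hsum : ∑ p, ∑ q, (if p = q then 0 else σ * (μ p ^ 2 + μ q ^ 2)) =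
      ((m : ℝ) - 1) * σ * (2 * ∑ p, μ p ^ 2) := by
    have : ∀ p q, (if p = q then 0 else σ * (μ p ^ 2 + μ q ^ 2)) =
        σ * (μ p ^ 2 + μ q ^ 2) - if p = q then σ * (2 * μ p ^ 2) else 0 := by
      intro p q
      split_ifs with h
      · subst h; ring
      · ring
    simp only [this, Finset.sum_sub_distrib, Finset.sum_ite_eq, Finset.mem_univ, if_true,
      ← Finset.mul_sum, Finset.sum_add_distrib, Finset.sum_const, Finset.card_univ,
      Fintype.card_fin, nsmul_eq_mul]
    ring
  rw [hnorm, hQ, ← hsum]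
  exact Finset.sum_le_sum fun p _ => Finset.sum_le_sum fun q _ => hpq p q

/-- If `n ≥ 4` is even and the isotropic curvature of an algebraic curvature tensor `R` on
`ℝ^n` is uniformly bounded below by `σ ≥ 0`, then for every complex two-form `ω`,
`Re ⟨ℛω, ω⟩ ≥ ((n−2)/2)·σ·|ω|²`. -/
theorem weitzenbock_curvature_lower_bound_of_isotropic (n : ℕ) (hn : 4 ≤ n) (hne : Even n)
    (σ : ℝ) (hσ : 0 ≤ σ) (R : Fin n → Fin n → Fin n → Fin n → ℝ)
    (hR1 : ∀ i j k l, R i j k l = -R j i k l)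
    (hR2 : ∀ i j k l, R i j k l = -R i j l k)
    (hR3 : ∀ i j k l, R i j k l = R k l i j)
    (hBianchi : ∀ i j k l, R i j k l + R j k i l + R k i j l = 0)
    (hIso : ∀ v₁ v₂ v₃ v₄ : EuclideanSpace ℝ (Fin n), Orthonormal ℝ ![v₁, v₂, v₃, v₄] →
      curvExt R v₁ v₃ v₁ v₃ + curvExt R v₁ v₄ v₁ v₄ + curvExt R v₂ v₃ v₂ v₃ +
        curvExt R v₂ v₄ v₂ v₄ - 2 * curvExt R v₁ v₂ v₃ v₄ ≥ σ)
    (ω : Fin n → Fin n → ℂ) (hω : ∀ i j, ω j i = -ω i j) :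
    (∑ i, ∑ j, weitzenbockOp R ω i j * (starRingEnd ℂ) (ω i j)).re ≥
      ((n : ℝ) - 2) / 2 * σ * ∑ i, ∑ j, ‖ω i j‖ ^ 2 := by
  obtain ⟨m, rfl⟩ := hne
  rw [re_weitzenbock]
  have h1 := quadForm_lower_bound σ R hR1 hR2 hR3 hBianchi hIso (fun i j => (ω i j).re)
    (fun i j => by rw [hω i j]; simp)
  have h2 := quadForm_lower_bound σ R hR1 hR2 hR3 hBianchi hIso (fun i j => (ω i j).im)
    (fun i j => by rw [hω i j]; simp)
  have h3 : ∑ i, ∑ j, ‖ω i j‖ ^ 2 =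
      ∑ i, ∑ j, (ω i j).re ^ 2 + ∑ i, ∑ j, (ω i j).im ^ 2 := by
    simp only [← Finset.sum_add_distrib]
    refine Finset.sum_congr rfl fun i _ => Finset.sum_congr rfl fun j _ => ?_
    rw [Complex.sq_norm, Complex.normSq_apply]; ring
  have h4 : (((m + m : ℕ) : ℝ) - 2) / 2 = (m : ℝ) - 1 := by push_cast; ring
  rw [h3, h4, mul_add]
  exact add_le_add h1 h2
end

section
/- Let m ≥ 2, let λ ∈ ℝ, and let A : Fin m → Fin m → ℝ be a symmetric matrix such that A(X,X) + A(Y,Y) ≥ −λ for every pair of orthonormal vectors X, Y in EuclideanSpace ℝ (Fin m), where A(X,Y) = Σ_{i,j} A i j · X i · Y j. Then for every skew-symmetric matrix ω : Fin m → Fin m → ℂ one has Re ( Σ_{i,j,k} A i j · ω j k · conj(ω i k) ) ≥ −(λ/2) · Σ_{i,k} |ω i k|². -/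
/-!
The quadratic form `ω ↦ Re Σ A i j ω j k conj (ω i k)` splits as the sum of its values on the real
and imaginary parts of `ω`, so it suffices to treat a real skew-symmetric matrix `S`, where it reads
`tr (A S Sᵀ)`. Diagonalise `A = U D Uᵀ` orthogonally and put `B = Uᵀ S U`, which is again skew.
Then `tr (A S Sᵀ) = Σ d p * B p q ^ 2`, and since `B p q ^ 2` is symmetric in `p, q` this equals
`(1/2) Σ (d p + d q) * B p q ^ 2`. For `p ≠ q` the hypothesis, applied to two orthonormal
eigenvectors, gives `d p + d q ≥ -λ`; the diagonal terms vanish because `B` is skew. Finally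
`Σ B p q ^ 2 = tr (S Sᵀ)` by orthogonal invariance.
-/

open Finset

/-- The estimate after diagonalisation. -/
lemma diagonal_skew_estimate {m : ℕ} (lam : ℝ) (d : Fin m → ℝ)
    (hd : ∀ p q, p ≠ q → -lam ≤ d p + d q)
    (B : Matrix (Fin m) (Fin m) ℝ) (hB : ∀ p q, B q p = -B p q) :
    -(lam / 2) * ∑ p, ∑ q, B p q ^ 2 ≤ ∑ p, ∑ q, d p * B p q ^ 2 := by
  have hswap : ∑ p, ∑ q, d p * B p q ^ 2 = ∑ p, ∑ q, d q * B p q ^ 2 := by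
    rw [Finset.sum_comm]
    refine Finset.sum_congr rfl fun p _ => Finset.sum_congr rfl fun q _ => ?_
    rw [hB p q, neg_sq]
  have hle : -lam * ∑ p, ∑ q, B p q ^ 2 ≤ ∑ p, ∑ q, (d p + d q) * B p q ^ 2 := by
    simp only [Finset.mul_sum]
    refine Finset.sum_le_sum fun p _ => Finset.sum_le_sum fun q _ => ?_
    by_cases hpq : p = q
    · subst hpq
      have h0 : B p p = 0 := by linarith [hB p p]
      simp [h0]
    · exact mul_le_mul_of_nonneg_right (hd p q hpq) (sq_nonneg _)
  simp only [add_mul, Finset.sum_add_distrib] at hle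
  linarith

lemma trace_mul_mul_transpose_eq_sum {m : ℕ} (A S : Matrix (Fin m) (Fin m) ℝ) :
    (A * (S * S.transpose)).trace = ∑ i, ∑ j, ∑ k, A i j * S j k * S i k := by
  simp only [Matrix.trace, Matrix.diag_apply, Matrix.mul_apply, Matrix.transpose_apply,
    Finset.mul_sum, mul_assoc]

/-- The estimate for a real two-form. -/
lemma real_skew_estimate {m : ℕ} (lam : ℝ)
    (A : Matrix (Fin m) (Fin m) ℝ) (hAsymm : ∀ i j, A i j = A j i)
    (hA : ∀ X Y : EuclideanSpace ℝ (Fin m), Orthonormal ℝ ![X, Y] →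
      (∑ i, ∑ j, A i j * X i * X j) + (∑ i, ∑ j, A i j * Y i * Y j) ≥ -lam)
    (S : Matrix (Fin m) (Fin m) ℝ) (hS : ∀ i j, S j i = -S i j) :
    -(lam / 2) * ∑ i, ∑ k, S i k ^ 2 ≤ ∑ i, ∑ j, ∑ k, A i j * S j k * S i k := by
  have hH : A.IsHermitian := Matrix.IsHermitian.ext fun i j => by simp [hAsymm i j]
  set b := hH.eigenvectorBasis with hb
  set d := hH.eigenvalues with hdef
  have hquad : ∀ p, ∑ i, ∑ j, A i j * b p i * b p j = d p := by
    intro p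
    rw [hdef, hH.eigenvalues_eq p]
    simp only [dotProduct, Matrix.mulVec, Finset.mul_sum, RCLike.re_to_real, Pi.star_apply,
      star_trivial]
    refine Finset.sum_congr rfl fun i _ => Finset.sum_congr rfl fun j _ => ?_
    ring
  have hd : ∀ p q, p ≠ q → -lam ≤ d p + d q := by
    intro p q hpq
    have horth : Orthonormal ℝ ![b p, b q] := by
      have h := b.orthonormal.comp ![p, q] (by
        intro x y; fin_cases x <;> fin_cases y <;> simp [hpq, Ne.symm hpq])
      have he : ![b p, b q] = ⇑b ∘ ![p, q] := by
        funext x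
        fin_cases x <;> rfl
      rwa [he]
    have h := hA _ _ horth
    rw [hquad, hquad] at h
    exact h
  set U : Matrix (Fin m) (Fin m) ℝ := hH.eigenvectorUnitary.1 with hU
  have hUU : U * U.transpose = 1 := by
    have h := Unitary.coe_mul_star_self hH.eigenvectorUnitary
    rwa [Unitary.coe_star, Matrix.star_eq_conjTranspose, Matrix.conjTranspose_eq_transpose_of_trivial] at h
  have hspec : A = U * Matrix.diagonal d * U.transpose := by
    have h := hH.spectral_theorem
    rw [Unitary.conjStarAlgAut_apply, Matrix.star_eq_conjTranspose,
      Matrix.conjTranspose_eq_transpose_of_trivial] at h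
    exact h
  set B := U.transpose * S * U with hBdef
  have hSt : S.transpose = -S := by ext i j; simpa using hS i j
  have hBskew : ∀ p q, B q p = -B p q := by
    have h : B.transpose = -B := by
      simp [hBdef, Matrix.transpose_mul, hSt, Matrix.mul_assoc]
    intro p q
    exact congrFun (congrFun h p) q
  have hBB : B * B.transpose = U.transpose * (S * S.transpose) * U := by
    calc B * B.transpose = U.transpose * S * (U * U.transpose) * S.transpose * U := by
          simp [hBdef, Matrix.transpose_mul, Matrix.mul_assoc]
      _ = _ := by rw [hUU]; simp [Matrix.mul_assoc]
  have htrace : (A * (S * S.transpose)).trace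
      = (Matrix.diagonal d * (B * B.transpose)).trace := by
    rw [hBB, hspec, Matrix.mul_assoc, Matrix.mul_assoc, Matrix.trace_mul_comm]
    simp only [Matrix.mul_assoc]
  have hnorm : (1 * (S * S.transpose)).trace = (1 * (B * B.transpose)).trace := by
    rw [hBB, Matrix.one_mul, Matrix.one_mul, Matrix.trace_mul_comm _ U, ← Matrix.mul_assoc, hUU,
      Matrix.one_mul]
  have key := diagonal_skew_estimate lam d hd B hBskew
  rw [trace_mul_mul_transpose_eq_sum, trace_mul_mul_transpose_eq_sum] at htrace hnorm
  simp only [Matrix.one_apply, Matrix.diagonal_apply, ite_mul, zero_mul, one_mul,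
    Finset.sum_ite_irrel, Finset.sum_const_zero, Finset.sum_ite_eq, Finset.mem_univ, if_true,
    mul_assoc, ← pow_two] at htrace hnorm
  simp only [mul_assoc]
  rw [htrace, hnorm]
  exact key

/-- Pointwise algebraic content of the boundary estimate under almost 2-convexity:
if the symmetric matrix `A` satisfies `A(X,X) + A(Y,Y) ≥ −λ` for all orthonormal `X, Y`, then
for every skew-symmetric `ω : Fin m → Fin m → ℂ`,
`Re (Σ_{i,j,k} A i j · ω j k · conj(ω i k)) ≥ −(λ/2)·Σ_{i,k} |ω i k|²`. -/
theorem almost_two_convexity_estimate (m : ℕ) (hm : 2 ≤ m) (lam : ℝ)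
    (A : Fin m → Fin m → ℝ) (hAsymm : ∀ i j, A i j = A j i)
    (hA : ∀ X Y : EuclideanSpace ℝ (Fin m), Orthonormal ℝ ![X, Y] →
      (∑ i, ∑ j, A i j * X i * X j) + (∑ i, ∑ j, A i j * Y i * Y j) ≥ -lam)
    (ω : Fin m → Fin m → ℂ) (hω : ∀ i j, ω j i = -ω i j) :
    (∑ i, ∑ j, ∑ k, (A i j : ℂ) * ω j k * (starRingEnd ℂ) (ω i k)).re ≥
      -(lam / 2) * ∑ i, ∑ k, ‖ω i k‖ ^ 2 := by
  have hre := real_skew_estimate lam A hAsymm hA (fun i j => (ω i j).re)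
    (fun i j => by simp [hω i j])
  have him := real_skew_estimate lam A hAsymm hA (fun i j => (ω i j).im)
    (fun i j => by simp [hω i j])
  have hL : (∑ i, ∑ j, ∑ k, (A i j : ℂ) * ω j k * (starRingEnd ℂ) (ω i k)).re
      = ∑ i, ∑ j, ∑ k, A i j * (ω j k).re * (ω i k).re
        + ∑ i, ∑ j, ∑ k, A i j * (ω j k).im * (ω i k).im := by
    simp only [Complex.re_sum, ← Finset.sum_add_distrib]
    simp
  have hR : ∑ i, ∑ k, ‖ω i k‖ ^ 2
      = ∑ i, ∑ k, (ω i k).re ^ 2 + ∑ i, ∑ k, (ω i k).im ^ 2 := by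
    simp only [← Finset.sum_add_distrib, Complex.sq_norm, Complex.normSq_apply]
    simp only [pow_two]
  rw [hL, hR, mul_add]
  exact add_le_add hre him
end

section
/- Let m ≥ 2, let λ ∈ ℝ, and let A : Fin m → Fin m → ℝ be a symmetric matrix such that Σ_{a=1}^{m−1} A(X_a, X_a) ≥ −λ for every orthonormal (m−1)-tuple of vectors X_1, …, X_{m−1} in EuclideanSpace ℝ (Fin m), where A(X,Y) = Σ_{i,j} A i j · X i · Y j. Then for every vector w : Fin m → ℂ one has (Σ_i A i i) · (Σ_i |w i|²) − Re ( Σ_{i,j} A i j · w j · conj(w i) ) ≥ −λ · Σ_i |w i|². -/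
open Finset

/-!
For a real unit vector `u`, complete `u` to an orthonormal basis `u, X_1, …, X_{m-1}`. The trace
of `A` is the sum of `A(b, b)` over this basis, so `tr A - A(u, u) = Σ_a A(X_a, X_a) ≥ -λ`
(`unit_vector_estimate`). Both sides being quadratic, scaling gives the estimate for every real
vector (`real_vector_estimate`). Since `A` is real, the real part of the sesquilinear form at `w` is
the sum of its values at the real and imaginary parts of `w`, so adding the two real estimates
proves the theorem.
-/

/-- The trace of a bilinear form is the sum of its diagonal values in any orthonormal basis. -/
theorem sum_quadratic_orthonormalBasis {m : ℕ} (A : Fin m → Fin m → ℝ)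
    (b : OrthonormalBasis (Fin m) ℝ (EuclideanSpace ℝ (Fin m))) :
    ∑ a, ∑ i, ∑ j, A i j * b a i * b a j = ∑ i, A i i := by
  -- Parseval applied to two standard basis vectors.
  have key : ∀ i j, ∑ a, b a i * b a j = if i = j then 1 else 0 := by
    intro i j
    have h := b.sum_inner_mul_inner (EuclideanSpace.single i (1 : ℝ)) (EuclideanSpace.single j 1)
    simpa [EuclideanSpace.inner_single_left, EuclideanSpace.inner_single_right, Pi.single_apply, eq_comm]
      using h
  rw [Finset.sum_comm]
  refine Finset.sum_congr rfl fun i _ => ?_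
  rw [Finset.sum_comm]
  simp_rw [mul_assoc, ← Finset.mul_sum, key]
  simp

theorem unit_vector_estimate {k : ℕ} {lam : ℝ} {A : Fin (k + 1) → Fin (k + 1) → ℝ}
    (hA : ∀ X : Fin k → EuclideanSpace ℝ (Fin (k + 1)), Orthonormal ℝ X →
      ∑ a, ∑ i, ∑ j, A i j * X a i * X a j ≥ -lam)
    (u : EuclideanSpace ℝ (Fin (k + 1))) (hu : ‖u‖ = 1) :
    ∑ i, A i i - ∑ i, ∑ j, A i j * u i * u j ≥ -lam := by
  have ho : Orthonormal ℝ (({0} : Set (Fin (k + 1))).domRestrict fun _ => u) := by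
    refine ⟨fun _ => hu, fun i j hij => (hij (Subsingleton.elim i j)).elim⟩
  obtain ⟨b, hb⟩ := ho.exists_orthonormalBasis_extension_of_card_eq (by simp)
  have h0 : b 0 = u := hb 0 rfl
  have h1 := hA (fun a => b a.succ) (b.orthonormal.comp _ (Fin.succ_injective k))
  have h2 := sum_quadratic_orthonormalBasis A b
  rw [Fin.sum_univ_succ, h0] at h2
  linarith

theorem real_vector_estimate {k : ℕ} {lam : ℝ} {A : Fin (k + 1) → Fin (k + 1) → ℝ}
    (hA : ∀ X : Fin k → EuclideanSpace ℝ (Fin (k + 1)), Orthonormal ℝ X →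
      ∑ a, ∑ i, ∑ j, A i j * X a i * X a j ≥ -lam)
    (v : Fin (k + 1) → ℝ) :
    (∑ i, A i i) * (∑ i, v i ^ 2) - ∑ i, ∑ j, A i j * v i * v j ≥ -lam * ∑ i, v i ^ 2 := by
  by_cases hv : v = 0
  · simp [hv]
  set x : EuclideanSpace ℝ (Fin (k + 1)) := WithLp.toLp 2 v with hx
  have hx0 : x ≠ 0 := by simpa [hx] using hv
  have hn : ‖x‖ ≠ 0 := norm_ne_zero_iff.mpr hx0
  have hsq : ∑ i, v i ^ 2 = ‖x‖ ^ 2 := by simp [EuclideanSpace.norm_sq_eq, hx]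
  have h := unit_vector_estimate hA (‖x‖⁻¹ • x) (norm_smul_inv_norm (𝕜 := ℝ) hx0)
  have hq : ∑ i, ∑ j, A i j * v i * v j
      = ‖x‖ ^ 2 * ∑ i, ∑ j, A i j * (‖x‖⁻¹ • x) i * (‖x‖⁻¹ • x) j := by
    simp_rw [Finset.mul_sum]
    refine Finset.sum_congr rfl fun i _ => Finset.sum_congr rfl fun j _ => ?_
    have hc : ∀ i, (‖x‖⁻¹ • x) i = ‖x‖⁻¹ * v i := fun i => by simp [hx]
    rw [hc, hc]
    field_simp
  rw [hsq, hq]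
  nlinarith [mul_le_mul_of_nonneg_left h (sq_nonneg ‖x‖)]

/-- Pointwise algebraic content of the boundary estimate under almost (n−2)-convexity:
if the symmetric matrix `A : Fin m → Fin m → ℝ` satisfies `Σ_a A(X_a,X_a) ≥ −λ` for every
orthonormal `(m−1)`-tuple `X`, then for every vector `w : Fin m → ℂ`,
`(tr A)·Σ|w i|² − Re (Σ_{i,j} A i j · w j · conj(w i)) ≥ −λ·Σ|w i|²`. -/
theorem almost_n_sub_two_convexity_estimate (m : ℕ) (hm : 2 ≤ m) (lam : ℝ)
    (A : Fin m → Fin m → ℝ) (hAsymm : ∀ i j, A i j = A j i)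
    (hA : ∀ X : Fin (m - 1) → EuclideanSpace ℝ (Fin m), Orthonormal ℝ X →
      ∑ a, ∑ i, ∑ j, A i j * X a i * X a j ≥ -lam)
    (w : Fin m → ℂ) :
    (∑ i, A i i) * (∑ i, ‖w i‖ ^ 2) -
        (∑ i, ∑ j, (A i j : ℂ) * w j * (starRingEnd ℂ) (w i)).re ≥
      -lam * ∑ i, ‖w i‖ ^ 2 := by
  obtain ⟨k, rfl⟩ : ∃ k, m = k + 1 := ⟨m - 1, by omega⟩
  have hre := real_vector_estimate (k := k) hA fun i => (w i).re
  have him := real_vector_estimate (k := k) hA fun i => (w i).im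
  have hnorm : ∑ i, ‖w i‖ ^ 2 = ∑ i, (w i).re ^ 2 + ∑ i, (w i).im ^ 2 := by
    rw [← Finset.sum_add_distrib]
    refine Finset.sum_congr rfl fun i _ => ?_
    rw [Complex.sq_norm, Complex.normSq_apply]
    ring
  have hform : (∑ i, ∑ j, (A i j : ℂ) * w j * (starRingEnd ℂ) (w i)).re
      = ∑ i, ∑ j, A i j * (w i).re * (w j).re + ∑ i, ∑ j, A i j * (w i).im * (w j).im := by
    simp_rw [Complex.re_sum, ← Finset.sum_add_distrib]
    refine Finset.sum_congr rfl fun i _ => Finset.sum_congr rfl fun j _ => ?_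
    simp
    ring
  rw [hnorm, hform]
  linarith
end

section
/- Let E be a real inner product space and let ν ∈ E be a unit vector. Define the boundary map χ = c̃(ν) ∘ c(ν) on the exterior algebra ΛE. Then: (i) χ ∘ χ = id; (ii) χ = id − 2 · w(ν) ∘ ∂(ν); (iii) for every ω ∈ ΛE, χω = ω if and only if ∂(ν)ω = 0 (the absolute boundary condition n(ω) = 0); and (iv) χω = −ω if and only if w(ν)ω = 0, i.e. ν ∧ ω = 0 (the relative boundary condition t(ω) = 0). -/
/-! The operators `w = w(ν)` and `∂ = ∂(ν)` satisfy `w² = 0`, `∂² = 0` and, since `‖ν‖ = 1`,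
`∂w + w∂ = id`. Hence `χ = (w + ∂)(w - ∂) = ∂w - w∂ = id - 2w∂ = 2∂w - id`, where `w∂` and `∂w` are
complementary idempotents. The `+1`-eigenspace of `χ` is therefore `ker (w∂) = ker ∂`, and the
`-1`-eigenspace is `ker (∂w) = ker w`. -/

/-- Wedging with `x`: left multiplication by `ι x` on the exterior algebra. -/
noncomputable def wedgeMul {E : Type*} [NormedAddCommGroup E] [InnerProductSpace ℝ E] (x : E) :
    ExteriorAlgebra ℝ E →ₗ[ℝ] ExteriorAlgebra ℝ E :=
  LinearMap.mulLeft ℝ (ExteriorAlgebra.ι ℝ x)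

/-- Left interior product (contraction) with the covector `⟨x, ·⟩` on the exterior algebra. -/
noncomputable def interiorMul {E : Type*} [NormedAddCommGroup E] [InnerProductSpace ℝ E] (x : E) :
    ExteriorAlgebra ℝ E →ₗ[ℝ] ExteriorAlgebra ℝ E :=
  CliffordAlgebra.contractLeft (innerₛₗ ℝ x)

/-- The Clifford multiplication `c(x) = x ∧ · − i_x ·`. -/
noncomputable def cOp {E : Type*} [NormedAddCommGroup E] [InnerProductSpace ℝ E] (x : E) :
    ExteriorAlgebra ℝ E →ₗ[ℝ] ExteriorAlgebra ℝ E :=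
  wedgeMul x - interiorMul x

/-- The Clifford multiplication `c̃(x) = x ∧ · + i_x ·`. -/
noncomputable def ctOp {E : Type*} [NormedAddCommGroup E] [InnerProductSpace ℝ E] (x : E) :
    ExteriorAlgebra ℝ E →ₗ[ℝ] ExteriorAlgebra ℝ E :=
  wedgeMul x + interiorMul x

/-- The boundary map `χ = c̃(ν) ∘ c(ν)`. -/
noncomputable def chiOp {E : Type*} [NormedAddCommGroup E] [InnerProductSpace ℝ E] (ν : E) :
    ExteriorAlgebra ℝ E →ₗ[ℝ] ExteriorAlgebra ℝ E :=
  ctOp ν ∘ₗ cOp ν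

theorem wedgeMul_wedgeMul {E : Type*} [NormedAddCommGroup E] [InnerProductSpace ℝ E]
    (x : E) (ω : ExteriorAlgebra ℝ E) : wedgeMul x (wedgeMul x ω) = 0 := by
  simp only [wedgeMul, LinearMap.mulLeft_apply]
  rw [← mul_assoc, ExteriorAlgebra.ι_sq_zero, zero_mul]

theorem interiorMul_interiorMul {E : Type*} [NormedAddCommGroup E] [InnerProductSpace ℝ E]
    (x : E) (ω : ExteriorAlgebra ℝ E) : interiorMul x (interiorMul x ω) = 0 :=
  CliffordAlgebra.contractLeft_contractLeft _ _

/-- The anticommutation relation `∂w + w∂ = ‖ν‖² = 1`, solved for `∂w`. -/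
theorem interiorMul_wedgeMul {E : Type*} [NormedAddCommGroup E] [InnerProductSpace ℝ E]
    (ν : E) (hν : ‖ν‖ = 1) (ω : ExteriorAlgebra ℝ E) :
    interiorMul ν (wedgeMul ν ω) = ω - wedgeMul ν (interiorMul ν ω) := by
  have h : innerₛₗ ℝ ν ν = 1 := by
    rw [innerₛₗ_apply_apply, real_inner_self_eq_norm_sq, hν, one_pow]
  have h2 := CliffordAlgebra.contractLeft_ι_mul (Q := (0 : QuadraticForm ℝ E)) (innerₛₗ ℝ ν) ν ω
  rw [h, one_smul] at h2
  exact h2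

theorem chiOp_apply {E : Type*} [NormedAddCommGroup E] [InnerProductSpace ℝ E]
    (ν : E) (hν : ‖ν‖ = 1) (ω : ExteriorAlgebra ℝ E) :
    chiOp ν ω = ω - (2 : ℝ) • wedgeMul ν (interiorMul ν ω) := by
  simp only [chiOp, ctOp, cOp, LinearMap.comp_apply, LinearMap.add_apply, LinearMap.sub_apply,
    map_sub, wedgeMul_wedgeMul, interiorMul_interiorMul, interiorMul_wedgeMul ν hν]
  module

/-- For a unit vector `ν`, the boundary map `χ = c̃(ν)c(ν)` satisfies `χ² = id`,
`χ = id − 2·w(ν)∘∂(ν)`, and its `±1`-eigenspaces are characterized by the absolute boundary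
condition `i_ν ω = 0` and the relative boundary condition `ν ∧ ω = 0`, respectively. -/
theorem boundary_map_properties {E : Type*} [NormedAddCommGroup E] [InnerProductSpace ℝ E]
    (ν : E) (hν : ‖ν‖ = 1) :
    (chiOp ν ∘ₗ chiOp ν = LinearMap.id) ∧
      (chiOp ν = LinearMap.id - (2 : ℝ) • (wedgeMul ν ∘ₗ interiorMul ν)) ∧
      (∀ ω : ExteriorAlgebra ℝ E, chiOp ν ω = ω ↔ interiorMul ν ω = 0) ∧
      (∀ ω : ExteriorAlgebra ℝ E, chiOp ν ω = -ω ↔ wedgeMul ν ω = 0) := by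
  have hχ := chiOp_apply ν hν
  have hdw := interiorMul_wedgeMul ν hν
  refine ⟨?_, ?_, fun ω => ⟨fun h => ?_, fun h => ?_⟩, fun ω => ⟨fun h => ?_, fun h => ?_⟩⟩
  · refine LinearMap.ext fun ω => ?_
    simp only [LinearMap.comp_apply, LinearMap.id_apply, hχ, map_sub, map_smul, hdw,
      interiorMul_interiorMul, map_zero]
    module
  · refine LinearMap.ext fun ω => ?_
    simp only [hχ, LinearMap.sub_apply, LinearMap.id_apply, LinearMap.smul_apply,
      LinearMap.comp_apply]
  · have h1 : wedgeMul ν (interiorMul ν ω) = 0 := by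
      rw [hχ, sub_eq_self] at h
      exact (smul_eq_zero.mp h).resolve_left two_ne_zero
    -- `∂w∂ = ∂`, so applying `∂` to `w∂ω = 0` gives `∂ω = 0`.
    have h2 := hdw (interiorMul ν ω)
    rw [h1, interiorMul_interiorMul, map_zero, map_zero, sub_zero] at h2
    exact h2.symm
  · rw [hχ, h, map_zero, smul_zero, sub_zero]
  · have h1 : wedgeMul ν (interiorMul ν ω) = ω := by
      rw [hχ] at h
      linear_combination (norm := module) (-(1 / 2 : ℝ)) • h
    rw [← h1, wedgeMul_wedgeMul]
  · have h1 := hdw ω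
    rw [h, map_zero] at h1
    rw [hχ, ← sub_eq_zero.mp h1.symm]
    module
end
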